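/- arXiv:math/0205040 — 2 statements merged into one kernel-verified Lean document; each statement's English description precedes it below -/
import Mathlib

section
/- In B(4,3) the following identities hold: P₁ = e₁⁻¹, P₂ = e₁e₂, P₃ = e₁e₂⁻¹e₃⁻¹, and P₄ = e₁e₂⁻¹e₃e₄. -/
open scoped commutatorElement

/-- The free Burnside group `B(4,3)` of exponent 3 on four generators:
the free group on four generators modulo the normal closure of all cubes. -/
abbrev B43 : Type :=
  FreeGroup (Fin 4) ⧸ Subgroup.normalClosure {w : FreeGroup (Fin 4) | ∃ v, w = v ^ 3}

/-- The images `x₁, x₂, x₃, x₄` of the free generators in `B(4,3)`. -/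
def x (i : Fin 4) : B43 := QuotientGroup.mk (FreeGroup.of i)

/-- The elements `P_i` of `B(4,3)`:
`P_i = x₁x₂⁻¹x₃x₄⁻¹x₁⁻¹x₂x₃⁻¹x₄ · x_i · x₄x₃⁻¹x₂x₁⁻¹x₄⁻¹x₃x₂⁻¹x₁ · x_i⁻¹`. -/
def P (i : Fin 4) : B43 :=
  x 0 * (x 1)⁻¹ * x 2 * (x 3)⁻¹ * (x 0)⁻¹ * x 1 * (x 2)⁻¹ * x 3 * x i *
    (x 3 * (x 2)⁻¹ * x 1 * (x 0)⁻¹ * (x 3)⁻¹ * x 2 * (x 1)⁻¹ * x 0) * (x i)⁻¹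

/-- The elements `e₁ = [[x₂,x₃],x₄]`, `e₂ = [[x₁,x₃],x₄]`, `e₃ = [[x₁,x₂],x₄]`,
`e₄ = [[x₁,x₂],x₃]` of `B(4,3)`, where `⁅a, b⁆ = a * b * a⁻¹ * b⁻¹`. -/
def e : Fin 4 → B43
  | 0 => ⁅⁅x 1, x 2⁆, x 3⁆
  | 1 => ⁅⁅x 0, x 2⁆, x 3⁆
  | 2 => ⁅⁅x 0, x 1⁆, x 3⁆
  | 3 => ⁅⁅x 0, x 1⁆, x 2⁆

/-!
Write `y₁ = x₁`, `y₂ = x₂⁻¹`, `y₃ = x₃`, `y₄ = x₄⁻¹`, `p = y₁y₂y₃y₄` and `q = y₄y₃y₂y₁`. Then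
`P_i = pq⁻¹ · x_i · p⁻¹q · x_i⁻¹ = ⁅pq⁻¹, x_i p⁻¹⁆`, and `pq⁻¹` is congruent to the product of the
`⁅y_j, y_k⁆` with `j < k` modulo triple commutators. A group of exponent 3 is 2-Engel, and in a
2-Engel group `⁅⁅a, b⁆, c⁆` is central, of order dividing 3, and alternating and multiplicative in
`a`, `b`, `c`. Hence each `P_i` is found by multilinear expansion.
-/

section Group

variable {G : Type*} [Group G]

theorem commutatorElement_mul_left_of_mem_center {a b c : G}
    (h : ⁅b, c⁆ ∈ Subgroup.center G) : ⁅a * b, c⁆ = ⁅a, c⁆ * ⁅b, c⁆ := by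
  rw [commutatorElement_mul_left_eq_conj_mul, Subgroup.mem_center_iff.mp h a,
    mul_inv_cancel_right, Subgroup.mem_center_iff.mp h]

theorem commutatorElement_mul_right_of_mem_center {a b c : G}
    (h : ⁅a, c⁆ ∈ Subgroup.center G) : ⁅a, b * c⁆ = ⁅a, b⁆ * ⁅a, c⁆ := by
  rw [commutatorElement_mul_right_eq_mul_conj, mul_assoc _ b, Subgroup.mem_center_iff.mp h b,
    ← mul_assoc, mul_inv_cancel_right]

theorem mul_inv_reverse_eq_commutatorElement_mul (a b c d : G) :
    a * b * c * d * (d * c * b * a)⁻¹ = ⁅a, b⁆ * ⁅b * a, c⁆ * ⁅c * b * a, d⁆ := by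
  simp only [commutatorElement_def]
  group

/-- The word defining `P_i`, evaluated at arbitrary elements `a`, `b`, `c`, `d` of a group in place
of `x₁`, `x₂`, `x₃`, `x₄`, and `g` in place of `x_i`. -/
def pWord (a b c d g : G) : G :=
  a * b⁻¹ * c * d⁻¹ * a⁻¹ * b * c⁻¹ * d * g * (d * c⁻¹ * b * a⁻¹ * d⁻¹ * c * b⁻¹ * a) * g⁻¹

theorem pWord_eq_commutatorElement (a b c d g : G) :
    pWord a b c d g =
      ⁅a * b⁻¹ * c * d⁻¹ * (d⁻¹ * c * b⁻¹ * a)⁻¹, g * (a * b⁻¹ * c * d⁻¹)⁻¹⁆ := by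
  rw [pWord, commutatorElement_def]
  group

variable (G) in
/-- A group is 2-Engel if every commutator commutes with its two entries. It suffices to ask this
of the first entry, since `⁅a, b⁆⁻¹ = ⁅b, a⁆`. -/
def IsTwoEngel : Prop :=
  ∀ a b : G, Commute a ⁅a, b⁆

theorem isTwoEngel_of_pow_three_eq_one (h : ∀ g : G, g ^ 3 = 1) : IsTwoEngel G := by
  have inv_eq (g : G) : g⁻¹ = g * g := by
    rw [inv_eq_iff_mul_eq_one, ← pow_three, h]
  have mul_mul_self (a b : G) : a * b * a = b⁻¹ * a⁻¹ * b⁻¹ :=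
    calc a * b * a = (a * b) ^ 3 * (b⁻¹ * a⁻¹ * b⁻¹) := by rw [pow_three]; group
      _ = b⁻¹ * a⁻¹ * b⁻¹ := by rw [h, one_mul]
  have commute_conj (a b : G) : Commute a (b * a * b⁻¹) :=
    calc a * (b * a * b⁻¹) = a * b * a * b⁻¹ := by group
      _ = b⁻¹ * a⁻¹ * (b⁻¹ * b⁻¹) := by rw [mul_mul_self]; group
      _ = b * b * a⁻¹ * b := by rw [← inv_eq, ← inv_eq, inv_inv]
      _ = b * (a * b⁻¹ * a) := by rw [mul_mul_self]; group
      _ = b * a * b⁻¹ * a := by group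
  intro a b
  have commutator_eq : ⁅a, b⁆ = a * (b * a * b⁻¹)⁻¹ := by rw [commutatorElement_def]; group
  rw [commutator_eq]
  exact (Commute.refl a).mul_right (commute_conj a b).inv_right

end Group

namespace IsTwoEngel

open scoped IsMulCommutative

variable {G : Type*} [Group G] (hG : IsTwoEngel G)

include hG

theorem commute_right (a b : G) : Commute b ⁅a, b⁆ := by
  rw [← commutatorElement_inv]
  exact (hG b a).inv_right

theorem commutator_inv_left (a b : G) : ⁅a⁻¹, b⁆ = ⁅a, b⁆⁻¹ := by
  rw [commutatorElement_inv_left, ← commutatorElement_inv a b, (hG a b).inv_inv.eq,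
    inv_mul_cancel_right]

theorem commutator_inv_right (a b : G) : ⁅a, b⁻¹⁆ = ⁅a, b⁆⁻¹ := by
  rw [← commutatorElement_inv, hG.commutator_inv_left, commutatorElement_inv]

theorem commutator_commutator_inv_left (a b c : G) : ⁅⁅a⁻¹, b⁆, c⁆ = ⁅⁅a, b⁆, c⁆⁻¹ := by
  rw [hG.commutator_inv_left, hG.commutator_inv_left]

theorem commutator_commutator_swap_left (a b c : G) : ⁅⁅b, a⁆, c⁆ = ⁅⁅a, b⁆, c⁆⁻¹ := by
  rw [← commutatorElement_inv a b, hG.commutator_inv_left]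

-- Expand both sides of `⁅a, (b * c)⁻¹⁆ = ⁅a, b * c⁆⁻¹`.
theorem commutator_commutator_swap_right (a b c : G) : ⁅⁅a, c⁆, b⁆ = ⁅⁅a, b⁆, c⁆⁻¹ := by
  have expand (b c : G) : ⁅a, b * c⁆ = ⁅a, b⁆ * ⁅⁅a, c⁆, b⁆⁻¹ * ⁅a, c⁆ := by
    simp only [commutatorElement_def]
    group
  have h : ⁅a, c⁆⁻¹ * ⁅⁅a, b⁆, c⁆⁻¹ * ⁅a, b⁆⁻¹ = ⁅a, c⁆⁻¹ * ⁅⁅a, c⁆, b⁆ * ⁅a, b⁆⁻¹ :=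
    calc ⁅a, c⁆⁻¹ * ⁅⁅a, b⁆, c⁆⁻¹ * ⁅a, b⁆⁻¹ = ⁅a, c⁻¹ * b⁻¹⁆ := by
          simp only [expand, hG.commutator_inv_right, hG.commutator_inv_left, inv_inv]
      _ = ⁅a, b * c⁆⁻¹ := by rw [← mul_inv_rev, hG.commutator_inv_right]
      _ = ⁅a, c⁆⁻¹ * ⁅⁅a, c⁆, b⁆ * ⁅a, b⁆⁻¹ := by rw [expand]; group
  exact (mul_left_cancel (mul_right_cancel h)).symm

theorem commutator_commutator_rotate (a b c : G) : ⁅⁅b, c⁆, a⁆ = ⁅⁅a, b⁆, c⁆ := by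
  rw [hG.commutator_commutator_swap_right b a c, hG.commutator_commutator_swap_left a b c, inv_inv]

-- In the Hall–Witt identity the conjugations are trivial and the three factors coincide.
theorem commutator_commutator_pow_three (a b c : G) : ⁅⁅a, b⁆, c⁆ ^ 3 = 1 := by
  have commute_a : Commute a ⁅⁅a, b⁆, c⁆ := by
    rw [← hG.commutator_commutator_rotate a b c]
    exact hG.commute_right ⁅b, c⁆ a
  have commute_b : Commute b ⁅⁅a, b⁆, c⁆ := by
    rw [hG.commutator_commutator_rotate c a b]
    exact hG.commute_right ⁅c, a⁆ b
  have commute_c : Commute c ⁅⁅a, b⁆, c⁆ := hG.commute_right ⁅a, b⁆ c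
  have hall_witt : a * ⁅⁅a⁻¹, b⁆, c⁆ * a⁻¹ * (c * ⁅⁅c⁻¹, a⁆, b⁆ * c⁻¹) *
      (b * ⁅⁅b⁻¹, c⁆, a⁆ * b⁻¹) = 1 := by
    simpa only [mul_assoc] using conj_commutatorElement_left_commutatorElement_mul a b c
  rw [hG.commutator_commutator_inv_left a, hG.commutator_commutator_inv_left c,
    hG.commutator_commutator_inv_left b, hG.commutator_commutator_rotate a b c,
    ← hG.commutator_commutator_rotate c a b, commute_a.inv_right.mul_inv_cancel,
    commute_b.inv_right.mul_inv_cancel, commute_c.inv_right.mul_inv_cancel] at hall_witt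
  rw [← inv_eq_one, ← inv_pow, pow_three', hall_witt]

-- Both `⁅⁅a, b⁆, ⁅c, d⁆⁆` and its inverse equal `⁅⁅⁅a, b⁆, c⁆, d⁆`, because the latter alternates
-- and `(a, b, c, d) ↦ (c, d, a, b)` is an even permutation.
theorem commute_commutators (a b c d : G) : Commute ⁅a, b⁆ ⁅c, d⁆ := by
  have inv_eq : ⁅⁅a, b⁆, ⁅c, d⁆⁆⁻¹ = ⁅⁅⁅a, b⁆, c⁆, d⁆ := by
    rw [commutatorElement_inv, hG.commutator_commutator_rotate ⁅a, b⁆ c d]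
  have eq : ⁅⁅a, b⁆, ⁅c, d⁆⁆ = ⁅⁅⁅a, b⁆, c⁆, d⁆ :=
    calc ⁅⁅a, b⁆, ⁅c, d⁆⁆ = ⁅⁅⁅c, d⁆, a⁆, b⁆ := hG.commutator_commutator_rotate ⁅c, d⁆ a b
      _ = ⁅⁅⁅a, c⁆, d⁆, b⁆ := by rw [hG.commutator_commutator_rotate a c d]
      _ = ⁅⁅⁅a, c⁆, b⁆, d⁆⁻¹ := hG.commutator_commutator_swap_right ⁅a, c⁆ b d
      _ = ⁅⁅⁅a, b⁆, c⁆, d⁆ := by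
        rw [hG.commutator_commutator_swap_right a b c, hG.commutator_inv_left, inv_inv]
  have sq_eq_one : ⁅⁅a, b⁆, ⁅c, d⁆⁆ ^ 2 = 1 := by
    rw [pow_two, mul_eq_one_iff_eq_inv, inv_eq, eq]
  have cube_eq_one := hG.commutator_commutator_pow_three a b ⁅c, d⁆
  rwa [pow_succ, sq_eq_one, one_mul, commutatorElement_eq_one_iff_commute] at cube_eq_one

theorem commutator_commutator_mem_center (a b c : G) : ⁅⁅a, b⁆, c⁆ ∈ Subgroup.center G := by
  rw [Subgroup.mem_center_iff]
  intro d
  rw [eq_comm, ← commutatorElement_eq_one_iff_mul_comm,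
    ← hG.commutator_commutator_rotate ⁅a, b⁆ c d]
  exact (hG.commute_commutators c d a b).commutator_eq

/-- The triple commutator `⁅⁅a, b⁆, c⁆` of a 2-Engel group, as an element of the centre. The
centre is written additively so that relations between triple commutators become linear. -/
def tripleCommutator (a b c : G) : Additive (Subgroup.center G) :=
  .ofMul ⟨⁅⁅a, b⁆, c⁆, hG.commutator_commutator_mem_center a b c⟩

local notation "T" => tripleCommutator hG

theorem tripleCommutator_swap_left (a b c : G) : T b a c = -T a b c :=
  Subtype.ext (hG.commutator_commutator_swap_left a b c)

theorem tripleCommutator_swap_right (a b c : G) : T a c b = -T a b c :=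
  Subtype.ext (hG.commutator_commutator_swap_right a b c)

theorem tripleCommutator_rotate (a b c : G) : T b c a = T a b c :=
  Subtype.ext (hG.commutator_commutator_rotate a b c)

theorem tripleCommutator_self_right (a b : G) : T a b b = 0 :=
  Subtype.ext (hG.commute_right a b).symm.commutator_eq

theorem tripleCommutator_self_left_right (a b : G) : T a b a = 0 :=
  Subtype.ext (hG a b).symm.commutator_eq

theorem tripleCommutator_mul_right (a b c d : G) : T a b (c * d) = T a b c + T a b d :=
  Subtype.ext <|
    commutatorElement_mul_right_of_mem_center (hG.commutator_commutator_mem_center a b d)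

theorem tripleCommutator_mul_left (a b c d : G) : T (a * b) c d = T a c d + T b c d := by
  simp only [← hG.tripleCommutator_rotate _ c d, hG.tripleCommutator_mul_right]

theorem tripleCommutator_inv_right (a b c : G) : T a b c⁻¹ = -T a b c :=
  Subtype.ext (hG.commutator_inv_right ⁅a, b⁆ c)

theorem tripleCommutator_inv_left (a b c : G) : T a⁻¹ b c = -T a b c :=
  Subtype.ext (hG.commutator_commutator_inv_left a b c)

theorem tripleCommutator_inv_middle (a b c : G) : T a b⁻¹ c = -T a b c := by
  rw [hG.tripleCommutator_swap_left, hG.tripleCommutator_inv_left, hG.tripleCommutator_swap_left,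
    neg_neg]

theorem three_nsmul_tripleCommutator (a b c : G) : 3 • T a b c = 0 :=
  Subtype.ext (hG.commutator_commutator_pow_three a b c)

theorem sum_tripleCommutator_mul (a b c d : G) :
    T a b (a * b * c * d) + T a c (a * b * c * d) + T a d (a * b * c * d) +
      T b c (a * b * c * d) + T b d (a * b * c * d) + T c d (a * b * c * d) =
    T a b c + T a b d + T a c d + T b c d := by
  simp only [hG.tripleCommutator_mul_right, hG.tripleCommutator_self_right,
    hG.tripleCommutator_self_left_right, hG.tripleCommutator_rotate a,
    hG.tripleCommutator_rotate b c d, hG.tripleCommutator_swap_right a b c,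
    hG.tripleCommutator_swap_right a b d, hG.tripleCommutator_swap_right a c d,
    hG.tripleCommutator_swap_right b c d]
  abel

theorem commutator_mul_inv_reverse (a b c d g : G) :
    ⁅a * b * c * d * (d * c * b * a)⁻¹, g⁆ =
      (T a b g + T a c g + T a d g + T b c g + T b d g + T c d g).toMul := by
  have expand : T a b g + T a c g + T a d g + T b c g + T b d g + T c d g =
      T a b g + T (b * a) c g + T (c * b * a) d g := by
    simp only [hG.tripleCommutator_mul_left]
    abel
  rw [expand, mul_inv_reverse_eq_commutatorElement_mul,
    commutatorElement_mul_left_of_mem_center (hG.commutator_commutator_mem_center _ d g),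
    commutatorElement_mul_left_of_mem_center (hG.commutator_commutator_mem_center _ c g)]
  rfl

theorem pWord_eq_tripleCommutator (a b c d g : G) :
    pWord a b c d g =
      (T a c g + T b d g - T a b g - T a d g - T b c g - T c d g +
        (T a b c - T a b d + T a c d - T b c d)).toMul := by
  have sum_eq := hG.sum_tripleCommutator_mul a b⁻¹ c d⁻¹
  rw [pWord_eq_commutatorElement, hG.commutator_mul_inv_reverse]
  congr 2
  generalize a * b⁻¹ * c * d⁻¹ = p at sum_eq ⊢
  simp only [hG.tripleCommutator_mul_right, hG.tripleCommutator_inv_right,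
    hG.tripleCommutator_inv_left, hG.tripleCommutator_inv_middle] at sum_eq ⊢
  linear_combination (norm := module) -sum_eq

end IsTwoEngel

open scoped IsMulCommutative in
theorem P_in_terms_of_e_general {G : Type*} [Group G] (hG : IsTwoEngel G) (a b c d : G) :
    pWord a b c d a = ⁅⁅b, c⁆, d⁆⁻¹ ∧
    pWord a b c d b = ⁅⁅b, c⁆, d⁆ * ⁅⁅a, c⁆, d⁆ ∧
    pWord a b c d c = ⁅⁅b, c⁆, d⁆ * ⁅⁅a, c⁆, d⁆⁻¹ * ⁅⁅a, b⁆, d⁆⁻¹ ∧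
    pWord a b c d d = ⁅⁅b, c⁆, d⁆ * ⁅⁅a, c⁆, d⁆⁻¹ * ⁅⁅a, b⁆, d⁆ * ⁅⁅a, b⁆, c⁆ := by
  let T := hG.tripleCommutator
  have three_nsmul := hG.three_nsmul_tripleCommutator
  have congr_coe {s t : Additive (Subgroup.center G)} (h : s = t) : (s.toMul : G) = t.toMul := by
    rw [h]
  -- The rotations and swaps sort the arguments of each triple commutator alphabetically.
  simp only [hG.pWord_eq_tripleCommutator, hG.tripleCommutator_self_right,
    hG.tripleCommutator_self_left_right, hG.tripleCommutator_rotate a,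
    hG.tripleCommutator_rotate b c d,
    hG.tripleCommutator_swap_right a b c, hG.tripleCommutator_swap_right a b d,
    hG.tripleCommutator_swap_right a c d, hG.tripleCommutator_swap_right b c d]
  refine ⟨congr_coe (t := -T b c d) ?_, congr_coe (t := T b c d + T a c d) ?_,
    congr_coe (t := T b c d + -T a c d + -T a b d) ?_,
    congr_coe (t := T b c d + -T a c d + T a b d + T a b c) ?_⟩
  · abel
  · linear_combination (norm := module) -three_nsmul b c d
  · linear_combination (norm := module) three_nsmul a c d - three_nsmul b c d
  · linear_combination (norm := module)
      three_nsmul a c d - three_nsmul a b d - three_nsmul b c d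

theorem B43.pow_three_eq_one (g : B43) : g ^ 3 = 1 := by
  induction g using QuotientGroup.induction_on with
  | H v =>
    rw [← QuotientGroup.mk_pow, QuotientGroup.eq_one_iff]
    exact Subgroup.subset_normalClosure ⟨v, rfl⟩

/-- In `B(4,3)`: `P₁ = e₁⁻¹`, `P₂ = e₁e₂`, `P₃ = e₁e₂⁻¹e₃⁻¹`, `P₄ = e₁e₂⁻¹e₃e₄`. -/
theorem P_in_terms_of_e :
    P 0 = (e 0)⁻¹ ∧ P 1 = e 0 * e 1 ∧ P 2 = e 0 * (e 1)⁻¹ * (e 2)⁻¹ ∧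
    P 3 = e 0 * (e 1)⁻¹ * e 2 * e 3 :=
  P_in_terms_of_e_general (isTwoEngel_of_pow_three_eq_one B43.pow_three_eq_one)
    (x 0) (x 1) (x 2) (x 3)
end

section
/- The quotient of B(4,3) by the normal closure of {P₁, P₂, P₃, P₄} is not isomorphic to B(4,3); in particular these two groups have different cardinalities (3¹⁰ versus 3¹⁴). -/
/-- The quotient of `B(4,3)` by the normal closure of `{P₁, P₂, P₃, P₄}`. -/
abbrev BurnsideGammaHat : Type :=
  B43 ⧸ Subgroup.normalClosure ({P 0, P 1, P 2, P 3} : Set B43)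

/-! In a group of exponent three every element commutes with its conjugates, so `⁅g, ⁅g, u⁆⁆ = 1`.
Hence `g - 1`, acting by conjugation on the abelian normal closure of an element, squares to zero,
and these operators anticommute. This makes triple commutators alternating and fourfold commutators
trivial, so that products of generators, increasing commutators and increasing triple commutators
exhaust the group. A group of normal forms with an explicit multiplication shows that none of them
collapse in the free Burnside group. In `B(4,3)` the relators `P i` are products of triple
commutators, which form a central elementary abelian subgroup of order `3 ^ 4`, and an invertible
matrix over `ZMod 3` shows that they generate it; the quotient therefore has order
`3 ^ (14 - 4)`. -/

open scoped commutatorElement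

section SquareZero

theorem mul_eq_neg_mul_of_sq_eq_zero {R : Type*} [Ring R] {a b : R} (ha : a ^ 2 = 0)
    (hb : b ^ 2 = 0) (hab : (a + b + a * b) ^ 2 = 0) : a * b = -(b * a) := by
  rw [pow_two] at ha hb
  have expand : a * b + b * a + a * b * a + b * a * b + a * b * a * b = 0 := by
    linear_combination (norm := noncomm_ring) hab - ha - hb - ha * b - a * hb
  have aba : a * b * a = 0 := by
    have left : a * b * a + a * b * a * b = 0 := by
      linear_combination (norm := noncomm_ring)
        a * expand - ha * b - ha * b * a - ha * b * a * b
    linear_combination (norm := noncomm_ring) left - left * b + a * b * a * hb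
  have bab : b * a * b = 0 := by
    linear_combination (norm := noncomm_ring)
      expand * b - a * hb - aba * b - b * a * hb - a * b * a * hb
  linear_combination (norm := noncomm_ring) expand - aba - bab - aba * b

theorem map_commutatorElement_sub_one {G R : Type*} [Group G] [Ring R] (ρ : G →* R)
    (hρ : ∀ g, (ρ g - 1) ^ 2 = 0) (c d : G) :
    ρ ⁅c, d⁆ - 1 = 2 * ((ρ c - 1) * (ρ d - 1)) := by
  obtain ⟨C, hC⟩ : ∃ C, ρ c = 1 + C := ⟨ρ c - 1, by abel⟩
  obtain ⟨D, hD⟩ : ∃ D, ρ d = 1 + D := ⟨ρ d - 1, by abel⟩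
  have C_sq : C ^ 2 = 0 := by simpa [hC] using hρ c
  have D_sq : D ^ 2 = 0 := by simpa [hD] using hρ d
  have anticomm : C * D = -(D * C) := by
    refine mul_eq_neg_mul_of_sq_eq_zero C_sq D_sq ?_
    convert hρ (c * d) using 2
    rw [map_mul, hC, hD]
    noncomm_ring
  rw [pow_two] at C_sq D_sq
  have swap : ρ c * ρ d = (1 + 2 * (C * D)) * (ρ d * ρ c) := by
    rw [hC, hD]
    linear_combination (norm := noncomm_ring)
      -anticomm - 2 * C * D_sq - 2 * C * D_sq * C - 2 * anticomm * C + 2 * D * C_sq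
  calc ρ ⁅c, d⁆ - 1
      = ρ c * ρ d * ρ (d * c)⁻¹ - 1 := by
        rw [← map_mul, ← map_mul, mul_inv_rev, commutatorElement_def, mul_assoc (c * d)]
    _ = (1 + 2 * (C * D)) * ρ (d * c * (d * c)⁻¹) - 1 := by
        rw [swap, map_mul, map_mul, mul_assoc]
    _ = 2 * ((ρ c - 1) * (ρ d - 1)) := by simp [hC, hD]

end SquareZero

section EngelAction

variable {G : Type*} [Group G]

/-- The conjugation action of `G` on an abelian normal subgroup `A`, as a homomorphism to the
endomorphism ring of `A` written additively; `conjEnd A g - 1` is then `u ↦ ⁅g, u⁆`. -/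
def conjEnd (A : Subgroup G) [A.Normal] : G →* AddMonoid.End (Additive A) :=
  (monoidEndToAdditive A).toMonoidHom.comp
    ((MulDistribMulAction.toMonoidEnd (MulAut A) A).comp MulAut.conjNormal)

open scoped IsMulCommutative in
theorem coe_conjEnd_sub_one_apply (A : Subgroup G) [A.Normal] [IsMulCommutative A] (g : G)
    (u : Additive A) : (((conjEnd A g - 1) u).toMul : G) = ⁅g, (u.toMul : G)⁆ := by
  rw [commutatorElement_def, ← div_eq_mul_inv]
  rfl

open scoped IsMulCommutative in
theorem commutatorElement_commutatorElement_eq_sq (A : Subgroup G) [A.Normal] [IsMulCommutative A]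
    (hA : ∀ g : G, ∀ u ∈ A, ⁅g, ⁅g, u⁆⁆ = 1) (c d : G) {u : G} (hu : u ∈ A) :
    ⁅⁅c, d⁆, u⁆ = ⁅c, ⁅d, u⁆⁆ ^ 2 := by
  have sq_eq_zero (g : G) : (conjEnd A g - 1) ^ 2 = 0 := by
    ext v
    rw [pow_two, AddMonoid.End.coe_mul, Function.comp_apply, coe_conjEnd_sub_one_apply,
      coe_conjEnd_sub_one_apply]
    exact hA g _ v.toMul.2
  let v : Additive A := Additive.ofMul ⟨u, hu⟩
  calc ⁅⁅c, d⁆, u⁆ = ((conjEnd A ⁅c, d⁆ - 1) v).toMul := (coe_conjEnd_sub_one_apply A _ v).symm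
    _ = ((2 * ((conjEnd A c - 1) * (conjEnd A d - 1))) v).toMul := by
      rw [map_commutatorElement_sub_one (conjEnd A) sq_eq_zero]
    _ = (((conjEnd A c - 1) ((conjEnd A d - 1) v)).toMul : G) ^ 2 := by
      rw [two_mul, pow_two]
      rfl
    _ = ⁅c, ⁅d, u⁆⁆ ^ 2 := by
      rw [coe_conjEnd_sub_one_apply, coe_conjEnd_sub_one_apply]
      rfl

end EngelAction

namespace ExponentThree

variable {G : Type*} [Group G]

theorem mul_self_eq_inv (h : ∀ g : G, g ^ 3 = 1) (g : G) : g * g = g⁻¹ :=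
  eq_inv_of_mul_eq_one_left (by rw [← pow_three', h])

theorem commute_conj_self (h : ∀ g : G, g ^ 3 = 1) (a b : G) : Commute a (b * a * b⁻¹) := by
  have left : a * (b * a * b⁻¹) * (b⁻¹ * a * b) = 1 :=
    calc a * (b * a * b⁻¹) * (b⁻¹ * a * b)
        = a * b * a * (b⁻¹ * b⁻¹) * a * b := by group
      _ = (a * b) ^ 3 := by rw [mul_self_eq_inv h, pow_three']; group
      _ = 1 := h _
  have right : b * a * b⁻¹ * a * (b⁻¹ * a * b) = 1 :=
    calc b * a * b⁻¹ * a * (b⁻¹ * a * b)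
        = b * (a * b⁻¹) ^ 3 * (b * b) := by rw [pow_three']; group
      _ = 1 := by rw [h, mul_one, ← pow_three, h]
  exact mul_right_cancel (left.trans right.symm)

theorem commute_conj_conj (h : ∀ g : G, g ^ 3 = 1) (a u v : G) :
    Commute (u * a * u⁻¹) (v * a * v⁻¹) := by
  simpa [MulAut.conj_apply, mul_assoc] using
    (commute_conj_self h a (u⁻¹ * v)).map (MulAut.conj u)

theorem commutatorElement_self_left (h : ∀ g : G, g ^ 3 = 1) (g u : G) : ⁅g, ⁅g, u⁆⁆ = 1 := by
  have expand : ⁅g, u⁆ = g * (u * g * u⁻¹)⁻¹ := by simp [commutatorElement_def, mul_assoc]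
  rw [expand]
  exact ((Commute.refl g).mul_right (commute_conj_self h g u).inv_right).commutator_eq

theorem isMulCommutative_normalClosure_singleton (h : ∀ g : G, g ^ 3 = 1) (u : G) :
    IsMulCommutative (Subgroup.normalClosure {u}) := by
  refine Subgroup.isMulCommutative_closure fun a ha b hb ↦ ?_
  simp only [Group.mem_conjugatesOfSet_iff, Set.mem_singleton_iff, exists_eq_left,
    isConj_iff] at ha hb
  obtain ⟨s, rfl⟩ := ha
  obtain ⟨t, rfl⟩ := hb
  exact commute_conj_conj h u s t

theorem commutatorElement_rotate (h : ∀ g : G, g ^ 3 = 1) (a b c : G) :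
    ⁅a, ⁅b, c⁆⁆ = ⁅b, ⁅c, a⁆⁆ := by
  have := isMulCommutative_normalClosure_singleton h a
  have sq : ⁅⁅b, c⁆, a⁆ = ⁅b, ⁅c, a⁆⁆ ^ 2 :=
    commutatorElement_commutatorElement_eq_sq (Subgroup.normalClosure {a})
      (fun g u _ ↦ commutatorElement_self_left h g u) b c (Subgroup.subset_normalClosure rfl)
  rw [← commutatorElement_inv, sq, pow_two, mul_self_eq_inv h, inv_inv]

theorem commutatorElement_inv_right_eq_inv (h : ∀ g : G, g ^ 3 = 1) (a b : G) :
    ⁅a, b⁻¹⁆ = ⁅a, b⁆⁻¹ := by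
  have comm : Commute b ⁅b, a⁆ :=
    commutatorElement_eq_one_iff_commute.mp (commutatorElement_self_left h b a)
  rw [commutatorElement_inv_right, commutatorElement_inv, mul_assoc, ← comm.eq, inv_mul_cancel_left]

theorem commutatorElement_swap_right (h : ∀ g : G, g ^ 3 = 1) (a b c : G) :
    ⁅a, ⁅b, c⁆⁆ = ⁅a, ⁅c, b⁆⁆⁻¹ := by
  rw [← commutatorElement_inv c b, commutatorElement_inv_right_eq_inv h]

theorem commutatorElement_swap_left (h : ∀ g : G, g ^ 3 = 1) (a b c : G) :
    ⁅a, ⁅b, c⁆⁆ = ⁅b, ⁅a, c⁆⁆⁻¹ := by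
  rw [commutatorElement_rotate h, commutatorElement_swap_right h]

-- `⁅a, ⁅b, ⁅c, d⁆⁆⁆` changes sign under every transposition of its arguments, so it is fixed by the
-- even permutation `a ↔ c, b ↔ d`; rotating it to `⁅⁅c, d⁆, ⁅a, b⁆⁆` shows that this permutation
-- also inverts it.
theorem commutatorElement_four_eq_one (h : ∀ g : G, g ^ 3 = 1) (a b c d : G) :
    ⁅a, ⁅b, ⁅c, d⁆⁆⁆ = 1 := by
  have swap_middle (a b c d : G) : ⁅a, ⁅b, ⁅c, d⁆⁆⁆ = ⁅a, ⁅c, ⁅b, d⁆⁆⁆⁻¹ := by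
    rw [commutatorElement_swap_left h b c d, commutatorElement_inv_right_eq_inv h]
  have swap_last (a b c d : G) : ⁅a, ⁅b, ⁅c, d⁆⁆⁆ = ⁅a, ⁅b, ⁅d, c⁆⁆⁆⁻¹ := by
    rw [commutatorElement_swap_right h b c d, commutatorElement_inv_right_eq_inv h]
  have fixed : ⁅a, ⁅b, ⁅c, d⁆⁆⁆ = ⁅c, ⁅d, ⁅a, b⁆⁆⁆ := by
    rw [swap_middle a b, commutatorElement_swap_left h a c, swap_last c a, swap_middle c a,
      inv_inv, inv_inv]
  have inverted : ⁅a, ⁅b, ⁅c, d⁆⁆⁆ = ⁅c, ⁅d, ⁅a, b⁆⁆⁆⁻¹ := by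
    rw [← commutatorElement_rotate h ⁅c, d⁆ a b, ← commutatorElement_rotate h ⁅a, b⁆ c d,
      commutatorElement_inv]
  rw [← fixed, ← mul_self_eq_inv h] at inverted
  exact left_eq_mul.mp inverted

theorem commute_commutatorElement (h : ∀ g : G, g ^ 3 = 1) (a b c d : G) :
    Commute ⁅a, b⁆ ⁅c, d⁆ := by
  rw [← commutatorElement_eq_one_iff_commute, commutatorElement_rotate h,
    commutatorElement_four_eq_one h]

end ExponentThree

theorem card_closure_range_dvd_pow {G κ : Type*} [Group G] [Finite κ] {n : ℕ}
    (hG : ∀ g : G, g ^ n = 1) {f : κ → G} (hf : ∀ s t, Commute (f s) (f t)) :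
    Nat.card (Subgroup.closure (Set.range f)) ∣ n ^ Nat.card κ := by
  classical
  have := Fintype.ofFinite κ
  let S : Finset G := Finset.univ.image f
  have coe_S : (S : Set G) = Set.range f := by simp [S]
  have : IsMulCommutative (Subgroup.closure (S : Set G)) :=
    Subgroup.isMulCommutative_closure (by rw [coe_S]; rintro _ ⟨s, rfl⟩ _ ⟨t, rfl⟩; exact hf s t)
  have : Group.FG (Subgroup.closure (S : Set G)) := Group.closure_finset_fg S
  open scoped IsMulCommutative in
  have exponent_rank : Nat.card (Subgroup.closure (S : Set G)) ∣
      n ^ Group.rank (Subgroup.closure (S : Set G)) :=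
    card_dvd_exponent_pow_rank' _ fun g ↦ Subtype.ext (hG g)
  rw [← coe_S]
  refine exponent_rank.trans (pow_dvd_pow n ((Subgroup.rank_closure_finset_le_card S).trans ?_))
  exact Finset.card_image_le.trans (by simp)

theorem natCard_fin_orderEmbedding (ι : Type*) [LinearOrder ι] (k : ℕ) :
    Nat.card (Fin k ↪o ι) = (Nat.card ι).choose k := by
  rw [Nat.card_congr Set.powersetCard.ofFinEmbEquiv, Set.powersetCard.card]

section BasicCommutators

variable {G ι : Type*} [Group G] [LinearOrder ι]

/-- The basic commutators of weights two and three in the family `y`, the ones that survive in a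
group of exponent three: one for each increasing pair and each increasing triple of indices. -/
def basicCommutator (y : ι → G) : (Fin 2 ↪o ι) ⊕ (Fin 3 ↪o ι) → G :=
  Sum.elim (fun s ↦ ⁅y (s 0), y (s 1)⁆) fun s ↦ ⁅y (s 0), ⁅y (s 1), y (s 2)⁆⁆

theorem commutatorElement_mem_closure_basicCommutator (y : ι → G) (i j : ι) :
    ⁅y i, y j⁆ ∈ Subgroup.closure (Set.range (basicCommutator y)) := by
  have of_lt {i j : ι} (hij : i < j) :
      ⁅y i, y j⁆ ∈ Subgroup.closure (Set.range (basicCommutator y)) :=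
    Subgroup.subset_closure ⟨.inl (OrderEmbedding.ofStrictMono ![i, j] (by simpa using hij)), rfl⟩
  rcases lt_trichotomy i j with hij | rfl | hji
  · exact of_lt hij
  · simp
  · simpa only [commutatorElement_inv] using inv_mem (of_lt hji)

theorem triple_commutatorElement_mem_closure_basicCommutator (h : ∀ g : G, g ^ 3 = 1)
    (y : ι → G) (i j k : ι) :
    ⁅y i, ⁅y j, y k⁆⁆ ∈ Subgroup.closure (Set.range (basicCommutator y)) := by
  set K := Subgroup.closure (Set.range (basicCommutator y))
  have of_lt_of_lt {i j k : ι} (hij : i < j) (hjk : j < k) : ⁅y i, ⁅y j, y k⁆⁆ ∈ K :=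
    Subgroup.subset_closure
      ⟨.inr (OrderEmbedding.ofStrictMono ![i, j, k] (by simpa using ⟨hij, hjk⟩)), rfl⟩
  have of_lt {i j k : ι} (hjk : j < k) : ⁅y i, ⁅y j, y k⁆⁆ ∈ K := by
    rcases lt_trichotomy i j with hij | rfl | hji
    · exact of_lt_of_lt hij hjk
    · rw [ExponentThree.commutatorElement_self_left h]
      exact K.one_mem
    rcases lt_trichotomy i k with hik | rfl | hki
    · rw [ExponentThree.commutatorElement_swap_left h]
      exact K.inv_mem (of_lt_of_lt hji hik)
    · rw [ExponentThree.commutatorElement_rotate h, commutatorElement_self,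
        commutatorElement_one_right]
      exact K.one_mem
    · rw [ExponentThree.commutatorElement_rotate h]
      exact of_lt_of_lt hjk hki
  rcases lt_trichotomy j k with hjk | rfl | hkj
  · exact of_lt hjk
  · simp
  · rw [ExponentThree.commutatorElement_swap_right h]
    exact K.inv_mem (of_lt hkj)

theorem commute_basicCommutator (h : ∀ g : G, g ^ 3 = 1) (y : ι → G)
    (s t : (Fin 2 ↪o ι) ⊕ (Fin 3 ↪o ι)) : Commute (basicCommutator y s) (basicCommutator y t) := by
  cases s <;> cases t <;> exact ExponentThree.commute_commutatorElement h _ _ _ _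

variable [Finite ι]

theorem card_closure_basicCommutator_dvd (h : ∀ g : G, g ^ 3 = 1) (y : ι → G) :
    Nat.card (Subgroup.closure (Set.range (basicCommutator y))) ∣
      3 ^ ((Nat.card ι).choose 2 + (Nat.card ι).choose 3) := by
  have := DFunLike.finite (Fin 2 ↪o ι)
  have := DFunLike.finite (Fin 3 ↪o ι)
  simpa only [Nat.card_sum, natCard_fin_orderEmbedding] using
    card_closure_range_dvd_pow h (commute_basicCommutator h y)

theorem normal_closure_basicCommutator (h : ∀ g : G, g ^ 3 = 1) {y : ι → G}
    (hy : Subgroup.closure (Set.range y) = ⊤) :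
    (Subgroup.closure (Set.range (basicCommutator y))).Normal := by
  set K := Subgroup.closure (Set.range (basicCommutator y)) with hK
  have commutator_mem (i : ι) (s) : ⁅y i, basicCommutator y s⁆ ∈ K := by
    cases s with
    | inl s => exact triple_commutatorElement_mem_closure_basicCommutator h y i (s 0) (s 1)
    | inr s => exact ExponentThree.commutatorElement_four_eq_one h _ _ _ _ ▸ K.one_mem
  have conj_mem (i : ι) : K ≤ K.comap (MulAut.conj (y i)).toMonoidHom := by
    rw [hK, Subgroup.closure_le]
    rintro _ ⟨s, rfl⟩
    change MulAut.conj (y i) (basicCommutator y s) ∈ K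
    rw [conj_eq_commutatorElement_mul]
    exact K.mul_mem (commutator_mem i s) (Subgroup.subset_closure ⟨s, rfl⟩)
  have : Finite K := Nat.finite_of_card_ne_zero
    (ne_zero_of_dvd_ne_zero (by positivity) (card_closure_basicCommutator_dvd h y))
  rw [← Subgroup.normalizer_eq_top_iff, eq_top_iff, ← hy, Subgroup.closure_le]
  rintro _ ⟨i, rfl⟩
  exact Subgroup.mem_normalizer_fintype fun g hg ↦ conj_mem i hg

theorem card_dvd_of_exponent_three (h : ∀ g : G, g ^ 3 = 1) {y : ι → G}
    (hy : Subgroup.closure (Set.range y) = ⊤) :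
    Nat.card G ∣ 3 ^ (Nat.card ι + ((Nat.card ι).choose 2 + (Nat.card ι).choose 3)) := by
  set K := Subgroup.closure (Set.range (basicCommutator y))
  have : K.Normal := normal_closure_basicCommutator h hy
  have quotient_exponent (g : G ⧸ K) : g ^ 3 = 1 := by
    induction g using QuotientGroup.induction_on with
    | H g => rw [← QuotientGroup.mk_pow, h, QuotientGroup.mk_one]
  have quotient_commute (i j : ι) : Commute (y i : G ⧸ K) (y j) :=
    commutatorElement_eq_one_iff_commute.mp <| (QuotientGroup.eq_one_iff _).mpr <|
      commutatorElement_mem_closure_basicCommutator y i j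
  have quotient_closure : Subgroup.closure (Set.range fun i ↦ (y i : G ⧸ K)) = ⊤ := by
    have := congrArg (Subgroup.map (QuotientGroup.mk' K)) hy
    rwa [MonoidHom.map_closure, ← Set.range_comp,
      Subgroup.map_top_of_surjective _ (QuotientGroup.mk'_surjective K)] at this
  have quotient_card := card_closure_range_dvd_pow quotient_exponent quotient_commute
  rw [quotient_closure, Subgroup.card_top] at quotient_card
  rw [Subgroup.card_eq_card_quotient_mul_card_subgroup K, pow_add]
  exact mul_dvd_mul quotient_card (card_closure_basicCommutator_dvd h y)

end BasicCommutators

theorem eq_top_of_span_eq_top {n : ℕ} {M : Type*} [AddCommGroup M] [Module (ZMod n) M] {s : Set M}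
    (hs : Submodule.span (ZMod n) s = ⊤) {H : Subgroup (Multiplicative M)}
    (hH : ∀ m ∈ s, Multiplicative.ofAdd m ∈ H) : H = ⊤ := by
  have span_le : Submodule.span (ZMod n) s ≤
      AddSubgroup.toZModSubmodule n (Subgroup.toAddSubgroup' H) := Submodule.span_le.mpr hH
  exact (Subgroup.eq_top_iff' H).mpr fun m ↦ span_le (hs ▸ Submodule.mem_top (x := m.toAdd))

theorem eq_top_of_ofAdd_single_mem {κ : Type*} [Finite κ] [DecidableEq κ] {n : ℕ}
    {H : Subgroup (Multiplicative (κ → ZMod n))}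
    (hH : ∀ s, Multiplicative.ofAdd (Pi.single s 1 : κ → ZMod n) ∈ H) : H = ⊤ := by
  refine eq_top_of_span_eq_top (Pi.basisFun (ZMod n) κ).span_eq ?_
  rintro _ ⟨s, rfl⟩
  simpa only [Pi.basisFun_apply] using hH s

/-- Coordinates `∏ xᵢ ^ lin i * ∏ [xᵢ, xⱼ] ^ quad (i, j) * ∏ [[xᵢ, xⱼ], xₖ] ^ cub (i, j, k)` of a
word in the free Burnside group of exponent three, with left-normed commutators
`[a, b] = a⁻¹ * b⁻¹ * a * b`. Order embeddings of `Fin 2` and `Fin 3` encode the increasing pairs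
and triples of indices. -/
@[ext] structure CollectedWord (ι : Type*) [Preorder ι] where
  lin : ι → ZMod 3
  quad : (Fin 2 ↪o ι) → ZMod 3
  cub : (Fin 3 ↪o ι) → ZMod 3

namespace CollectedWord

variable {ι : Type*}

section Preorder

variable [Preorder ι]

/-- The increasing pair obtained from an increasing triple by omitting its entry at `m`. -/
def face (m : Fin 3) (s : Fin 3 ↪o ι) : Fin 2 ↪o ι := (Fin.succAboveOrderEmb m).trans s

@[simp] theorem face_zero_zero (s : Fin 3 ↪o ι) : face 0 s 0 = s 1 := rfl
@[simp] theorem face_zero_one (s : Fin 3 ↪o ι) : face 0 s 1 = s 2 := rfl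
@[simp] theorem face_one_zero (s : Fin 3 ↪o ι) : face 1 s 0 = s 0 := rfl
@[simp] theorem face_one_one (s : Fin 3 ↪o ι) : face 1 s 1 = s 2 := rfl
@[simp] theorem face_two_zero (s : Fin 3 ↪o ι) : face 2 s 0 = s 0 := rfl
@[simp] theorem face_two_one (s : Fin 3 ↪o ι) : face 2 s 1 = s 1 := rfl

-- The product of two words in normal form, brought back to normal form by the collection process.
@[simps] instance : Mul (CollectedWord ι) where
  mul u v :=
    { lin i := u.lin i + v.lin i
      quad s := u.quad s + v.quad s - u.lin (s 1) * v.lin (s 0)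
      cub s := u.cub s + v.cub s + u.quad (face 0 s) * v.lin (s 0)
        - u.quad (face 1 s) * v.lin (s 1) + u.quad (face 2 s) * v.lin (s 2)
        - u.lin (s 1) * u.lin (s 2) * v.lin (s 0) + u.lin (s 2) * v.lin (s 0) * v.lin (s 1)
        - u.lin (s 1) * v.lin (s 0) * v.lin (s 2) }

@[simps] instance : One (CollectedWord ι) where
  one := ⟨0, 0, 0⟩

instance : Inv (CollectedWord ι) where
  inv u := u * u

theorem mul_mul_self (u : CollectedWord ι) : u * u * u = 1 := by
  ext
  · simp only [mul_lin, one_lin, Pi.zero_apply]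
    ring_nf
    reduce_mod_char
  · simp only [mul_quad, mul_lin, one_quad, Pi.zero_apply]
    ring_nf
    reduce_mod_char
  · simp only [mul_cub, mul_quad, face_zero_one, face_zero_zero, face_one_one, face_one_zero,
      face_two_one, face_two_zero, mul_lin, one_cub, Pi.zero_apply]
    ring_nf
    reduce_mod_char

protected theorem mul_assoc (u v w : CollectedWord ι) : u * v * w = u * (v * w) := by
  ext s
  · exact add_assoc _ _ _
  · simp only [mul_quad, mul_lin]
    ring
  · have three_eq_zero : (3 : ZMod 3) = 0 := rfl
    simp only [mul_cub, mul_quad, face_zero_one, face_zero_zero, face_one_one, face_one_zero,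
      face_two_one, face_two_zero, mul_lin]
    linear_combination -(v.lin (s 1) * u.lin (s 2) * w.lin (s 0)) * three_eq_zero

instance : Group (CollectedWord ι) :=
  Group.ofLeftAxioms CollectedWord.mul_assoc (fun u ↦ by ext <;> simp) mul_mul_self

theorem cube_eq_one (u : CollectedWord ι) : u ^ 3 = 1 := by
  rw [pow_three', mul_mul_self]

/-- The abelianization map, reading off the exponent of each generator modulo three. -/
@[simps] def linHom : CollectedWord ι →* Multiplicative (ι → ZMod 3) where
  toFun u := .ofAdd u.lin
  map_one' := rfl
  map_mul' _ _ := rfl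

/-- The word `∏ [[xᵢ, xⱼ], xₖ] ^ c (i, j, k)`. -/
@[simps] def ofCub : Multiplicative ((Fin 3 ↪o ι) → ZMod 3) →* CollectedWord ι where
  toFun c := ⟨0, 0, c.toAdd⟩
  map_one' := rfl
  map_mul' c d := by ext <;> simp

/-- The word `∏ [xᵢ, xⱼ] ^ q (i, j)`. -/
@[simps] def ofQuad : Multiplicative ((Fin 2 ↪o ι) → ZMod 3) →* CollectedWord ι where
  toFun q := ⟨0, q.toAdd, 0⟩
  map_one' := rfl
  map_mul' c d := by ext <;> simp

theorem eq_ofQuad_mul_ofCub {u : CollectedWord ι} (hu : u.lin = 0) :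
    u = ofQuad (.ofAdd u.quad) * ofCub (.ofAdd u.cub) := by
  ext <;> simp [hu]

theorem lin_commutatorElement (u v : CollectedWord ι) : ⁅u, v⁆.lin = 0 := by
  have : linHom ⁅u, v⁆ = 1 := by rw [map_commutatorElement, (Commute.all _ _).commutator_eq]
  exact this

theorem quad_commutatorElement (u v : CollectedWord ι) (s : Fin 2 ↪o ι) :
    ⁅u, v⁆.quad s = u.lin (s 0) * v.lin (s 1) - u.lin (s 1) * v.lin (s 0) := by
  have swap : ⁅u, v⁆ * (v * u) = u * v := by simp [commutatorElement_def, mul_assoc]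
  have quad_swap := congrArg (quad · s) swap
  simp only [mul_quad, lin_commutatorElement, Pi.zero_apply, zero_mul, sub_zero] at quad_swap
  linear_combination quad_swap

theorem commutatorElement_eq_ofCub (u : CollectedWord ι) {v : CollectedWord ι} (hv : v.lin = 0) :
    ⁅u, v⁆ = ofCub (.ofAdd fun s ↦ -(v.quad (face 0 s) * u.lin (s 0)
      - v.quad (face 1 s) * u.lin (s 1) + v.quad (face 2 s) * u.lin (s 2))) := by
  rw [commutatorElement_def, mul_inv_eq_iff_eq_mul, mul_inv_eq_iff_eq_mul, mul_assoc]
  ext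
  · simp [hv]
  · simp [hv, add_comm]
  · simp only [mul_cub, mul_lin, hv, ofCub_apply_lin, ofCub_apply_quad, ofCub_apply_cub,
      toAdd_ofAdd, Pi.zero_apply]
    ring

theorem mem_range_ofCub {u : CollectedWord ι} (hlin : u.lin = 0) (hquad : u.quad = 0) :
    u ∈ ofCub.range :=
  ⟨.ofAdd u.cub, by ext <;> simp [hlin, hquad]⟩

theorem ofCub_cub {u : CollectedWord ι} (hu : u ∈ ofCub.range) : ofCub (.ofAdd u.cub) = u := by
  obtain ⟨c, rfl⟩ := hu
  rfl

theorem normal_range_ofCub : (ofCub (ι := ι)).range.Normal := by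
  refine ⟨?_⟩
  rintro _ ⟨c, rfl⟩ u
  have comm : Commute u (ofCub c) := by ext <;> simp [add_comm]
  rw [comm.eq, mul_inv_cancel_right]
  exact ⟨c, rfl⟩

theorem commutatorElement_mem_range_ofCub {u v : CollectedWord ι} (huv : v.lin = -u.lin) :
    ⁅u, v⁆ ∈ ofCub.range := by
  refine mem_range_ofCub (lin_commutatorElement u v) ?_
  ext s
  rw [quad_commutatorElement, huv]
  simp only [Pi.neg_apply, Pi.zero_apply]
  ring

end Preorder

section LinearOrder

variable [LinearOrder ι]

/-- The generator `xᵢ` in coordinates. -/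
@[simps] def gen (i : ι) : CollectedWord ι := ⟨Pi.single i 1, 0, 0⟩

theorem quad_commutatorElement_gen (s : Fin 2 ↪o ι) :
    ⁅gen (s 0), gen (s 1)⁆.quad = Pi.single s 1 := by
  ext t
  have hs : s 0 < s 1 := s.strictMono (by decide)
  have ht : t 0 < t 1 := t.strictMono (by decide)
  rw [quad_commutatorElement]
  simp only [gen_lin, Pi.single_apply, DFunLike.ext_iff, Fin.forall_fin_two]
  grind

theorem commutatorElement_gen_commutatorElement_gen (s : Fin 3 ↪o ι) :
    ⁅gen (s 0), ⁅gen (s 1), gen (s 2)⁆⁆ = ofCub (.ofAdd (-Pi.single s 1)) := by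
  rw [commutatorElement_eq_ofCub _ (lin_commutatorElement _ _)]
  congr 2
  ext t
  have hs : s 0 < s 1 := s.strictMono (by decide)
  have ht : t 0 < t 1 := t.strictMono (by decide)
  have ht' : t 1 < t 2 := t.strictMono (by decide)
  have quad_eq : ⁅gen (s 1), gen (s 2)⁆.quad = Pi.single (face 0 s) 1 :=
    quad_commutatorElement_gen (face 0 s)
  simp only [quad_eq, gen_lin, Pi.single_apply, Pi.neg_apply, DFunLike.ext_iff, Fin.forall_fin_succ,
    Fin.succ_zero_eq_one, Fin.succ_one_eq_two, face_zero_zero, face_zero_one, face_one_zero,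
    face_one_one, face_two_zero, face_two_one, IsEmpty.forall_iff, and_true]
  grind

variable [Finite ι]

theorem closure_range_gen : Subgroup.closure (Set.range (gen (ι := ι))) = ⊤ := by
  have := DFunLike.finite (Fin 2 ↪o ι)
  have := DFunLike.finite (Fin 3 ↪o ι)
  set H := Subgroup.closure (Set.range (gen (ι := ι)))
  have gen_mem (i : ι) : gen i ∈ H := Subgroup.subset_closure ⟨i, rfl⟩
  have comm_mem {u v : CollectedWord ι} (hu : u ∈ H) (hv : v ∈ H) : ⁅u, v⁆ ∈ H :=
    H.commutator_le_self (Subgroup.commutator_mem_commutator hu hv)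
  have cub_mem : H.comap ofCub = ⊤ := eq_top_of_ofAdd_single_mem fun s ↦ by
    rw [Subgroup.mem_comap, ← inv_mem_iff, ← map_inv, ← ofAdd_neg,
      ← commutatorElement_gen_commutatorElement_gen]
    exact comm_mem (gen_mem _) (comm_mem (gen_mem _) (gen_mem _))
  have quad_mem : H.comap ofQuad = ⊤ := eq_top_of_ofAdd_single_mem fun s ↦ by
    have mem := comm_mem (gen_mem (s 0)) (gen_mem (s 1))
    rw [eq_ofQuad_mul_ofCub (lin_commutatorElement _ _), quad_commutatorElement_gen] at mem
    exact (H.mul_mem_cancel_right (Subgroup.eq_top_iff' _ |>.mp cub_mem _)).mp mem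
  have lin_mem : H.map linHom = ⊤ :=
    eq_top_of_ofAdd_single_mem fun i ↦ ⟨gen i, gen_mem i, rfl⟩
  rw [Subgroup.eq_top_iff'] at cub_mem quad_mem lin_mem ⊢
  intro u
  obtain ⟨v, v_mem, hv⟩ := lin_mem (linHom u)
  have lin_eq : (v⁻¹ * u).lin = 0 := by
    change linHom (v⁻¹ * u) = 1
    rw [map_mul, map_inv, hv, inv_mul_cancel]
  have : v⁻¹ * u ∈ H := by
    rw [eq_ofQuad_mul_ofCub lin_eq]
    exact H.mul_mem (quad_mem _) (cub_mem _)
  exact (H.mul_mem_cancel_left (H.inv_mem v_mem)).mp this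

theorem natCard : Nat.card (CollectedWord ι) =
    3 ^ (Nat.card ι + ((Nat.card ι).choose 2 + (Nat.card ι).choose 3)) := by
  have := DFunLike.finite (Fin 2 ↪o ι)
  have := DFunLike.finite (Fin 3 ↪o ι)
  let e : CollectedWord ι ≃ (ι → ZMod 3) × ((Fin 2 ↪o ι) → ZMod 3) × ((Fin 3 ↪o ι) → ZMod 3) :=
    { toFun u := (u.lin, u.quad, u.cub), invFun c := ⟨c.1, c.2.1, c.2.2⟩ }
  simp [Nat.card_congr e, Nat.card_prod, Nat.card_fun, natCard_fin_orderEmbedding, pow_add]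

theorem natCard_range_ofCub :
    Nat.card (ofCub (ι := ι)).range = 3 ^ (Nat.card ι).choose 3 := by
  have := DFunLike.finite (Fin 3 ↪o ι)
  have ofCub_injective : Function.Injective (ofCub (ι := ι)) := fun _ _ h ↦ congrArg cub h
  rw [← Nat.card_congr (MonoidHom.ofInjective ofCub_injective).toEquiv,
    Nat.card_congr Multiplicative.toAdd, Nat.card_fun, natCard_fin_orderEmbedding, Nat.card_zmod]

end LinearOrder

end CollectedWord

/-- The free Burnside group `B(ι, 3)` of exponent three on the generators `ι`, presented as `B43`
is, which is the case `ι = Fin 4`. -/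
abbrev FreeBurnsideThree (ι : Type*) : Type _ :=
  FreeGroup ι ⧸ Subgroup.normalClosure {w : FreeGroup ι | ∃ v, w = v ^ 3}

namespace FreeBurnsideThree

variable {ι : Type*}

/-- The generator of `FreeBurnsideThree ι` with index `i`. -/
def of (i : ι) : FreeBurnsideThree ι := QuotientGroup.mk (FreeGroup.of i)

theorem cube_eq_one (g : FreeBurnsideThree ι) : g ^ 3 = 1 := by
  induction g using QuotientGroup.induction_on with
  | H w =>
    rw [← QuotientGroup.mk_pow, QuotientGroup.eq_one_iff]
    exact Subgroup.subset_normalClosure ⟨w, rfl⟩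

theorem closure_range_of : Subgroup.closure (Set.range (of (ι := ι))) = ⊤ := by
  have := congrArg (Subgroup.map (QuotientGroup.mk'
    (Subgroup.normalClosure {w : FreeGroup ι | ∃ v, w = v ^ 3}))) (FreeGroup.closure_range_of ι)
  rwa [MonoidHom.map_closure, ← Set.range_comp,
    Subgroup.map_top_of_surjective _ (QuotientGroup.mk'_surjective _)] at this

variable [LinearOrder ι]

/-- The collection homomorphism, which takes an element to its normal form. -/
def collect : FreeBurnsideThree ι →* CollectedWord ι :=
  QuotientGroup.lift _ (FreeGroup.lift CollectedWord.gen) <| Subgroup.normalClosure_le_normal <| by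
    rintro _ ⟨v, rfl⟩
    exact MonoidHom.mem_ker.mpr (by rw [map_pow, CollectedWord.cube_eq_one])

theorem collect_of (i : ι) : collect (of i) = CollectedWord.gen i := FreeGroup.lift_apply_of

variable [Finite ι]

theorem collect_surjective : Function.Surjective (collect (ι := ι)) := by
  rw [← MonoidHom.range_eq_top, MonoidHom.range_eq_map, ← closure_range_of,
    MonoidHom.map_closure, ← Set.range_comp]
  simpa only [Function.comp_def, collect_of] using CollectedWord.closure_range_gen

theorem natCard : Nat.card (FreeBurnsideThree ι) =
    3 ^ (Nat.card ι + ((Nat.card ι).choose 2 + (Nat.card ι).choose 3)) := by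
  refine (card_dvd_of_exponent_three cube_eq_one closure_range_of).antisymm ?_
  rw [← CollectedWord.natCard]
  exact Subgroup.card_dvd_of_surjective collect collect_surjective

theorem collect_injective : Function.Injective (collect (ι := ι)) := by
  have card_eq : Nat.card (FreeBurnsideThree ι) = Nat.card (CollectedWord ι) :=
    natCard.trans CollectedWord.natCard.symm
  have : Finite (FreeBurnsideThree ι) :=
    Nat.finite_of_card_ne_zero (by rw [natCard]; positivity)
  exact ((Nat.bijective_iff_surjective_and_card _).mpr ⟨collect_surjective, card_eq⟩).injective

end FreeBurnsideThree

section Relators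

open FreeBurnsideThree CollectedWord

theorem collect_x (i : Fin 4) : collect (x i) = gen i := collect_of i

-- With `a = x₁x₂⁻¹x₃x₄⁻¹` and `b = x₁⁻¹x₂x₃⁻¹x₄`, opposite modulo commutators, the relator is
-- `P i = ⁅ab, xᵢ⁆⁅xᵢ, ⁅a, b⁆⁆⁅a, b⁆`.
theorem collect_P_mem_range_ofCub (i : Fin 4) : collect (P i) ∈ ofCub.range := by
  let a : CollectedWord (Fin 4) := gen 0 * (gen 1)⁻¹ * gen 2 * (gen 3)⁻¹
  let b : CollectedWord (Fin 4) := (gen 0)⁻¹ * gen 1 * (gen 2)⁻¹ * gen 3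
  have factor : collect (P i) = ⁅gen i, a * b⁆⁻¹ * ⁅gen i, ⁅a, b⁆⁆ * ⁅a, b⁆ := by
    simp only [P, map_mul, map_inv, collect_x, a, b, commutatorElement_def]
    group
  have lin_b : b.lin = -a.lin := by decide
  have lin_ab : (a * b).lin = 0 := by decide
  rw [factor, commutatorElement_eq_ofCub _ lin_ab,
    commutatorElement_eq_ofCub _ (lin_commutatorElement a b)]
  exact mul_mem (mul_mem (inv_mem ⟨_, rfl⟩) ⟨_, rfl⟩) (commutatorElement_mem_range_ofCub lin_b)

/-- The increasing triple of all indices but `m`. -/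
def tripleOmitting (m : Fin 4) : Fin 3 ↪o Fin 4 := Fin.succAboveOrderEmb m

/-- The exponents of the triple commutators in the normal forms of the relators: row `i` belongs to
`P i`, column `m` to `tripleOmitting m`. -/
def relatorMatrix : Matrix (Fin 4) (Fin 4) (ZMod 3) :=
  !![2, 0, 0, 0; 1, 1, 0, 0; 1, 2, 2, 0; 1, 2, 1, 1]

theorem cub_collect_P (i m : Fin 4) :
    (collect (P i)).cub (tripleOmitting m) = relatorMatrix i m := by
  simp only [P, map_mul, map_inv, collect_x]
  fin_cases i <;> fin_cases m <;> decide +kernel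

theorem isUnit_relatorMatrix : IsUnit relatorMatrix := by
  rw [Matrix.isUnit_iff_isUnit_det]
  decide

theorem span_cub_collect_P :
    Submodule.span (ZMod 3) (Set.range fun i ↦ (collect (P i)).cub) = ⊤ := by
  have : Fact (Nat.Prime 3) := ⟨Nat.prime_three⟩
  have := Fintype.ofFinite (Fin 3 ↪o Fin 4)
  have rows : LinearIndependent (ZMod 3) fun i ↦ (collect (P i)).cub := by
    refine .of_comp (LinearMap.funLeft (ZMod 3) (ZMod 3) tripleOmitting) ?_
    convert Matrix.linearIndependent_rows_iff_isUnit.mpr isUnit_relatorMatrix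
    ext i m
    exact cub_collect_P i m
  refine rows.span_eq_top_of_card_eq_finrank ?_
  rw [Module.finrank_fintype_fun_eq_card, ← Nat.card_eq_fintype_card,
    ← Nat.card_eq_fintype_card, natCard_fin_orderEmbedding, Nat.card_fin]
  rfl

theorem map_collect_normalClosure_P :
    (Subgroup.normalClosure (Set.range P)).map collect = ofCub.range := by
  apply le_antisymm
  · have : (ofCub (ι := Fin 4)).range.Normal := normal_range_ofCub
    rw [Subgroup.map_le_iff_le_comap]
    refine Subgroup.normalClosure_le_normal ?_
    rintro _ ⟨i, rfl⟩
    exact collect_P_mem_range_ofCub i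
  · rw [MonoidHom.range_eq_map, Subgroup.map_le_iff_le_comap, top_le_iff]
    refine eq_top_of_span_eq_top span_cub_collect_P ?_
    rintro _ ⟨i, rfl⟩
    exact ⟨P i, Subgroup.subset_normalClosure ⟨i, rfl⟩,
      (ofCub_cub (collect_P_mem_range_ofCub i)).symm⟩

theorem natCard_normalClosure_P : Nat.card (Subgroup.normalClosure (Set.range P)) = 3 ^ 4 := by
  rw [← Subgroup.card_map_of_injective collect_injective, map_collect_normalClosure_P,
    natCard_range_ofCub, Nat.card_fin]
  rfl

end Relators

/-- The quotient is not isomorphic to `B(4,3)`; in particular the two groups have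
different cardinalities: `3¹⁰` versus `3¹⁴`. -/
theorem BurnsideGammaHat_not_iso_B43 :
    IsEmpty (BurnsideGammaHat ≃* B43) ∧
    Nat.card BurnsideGammaHat = 3 ^ 10 ∧ Nat.card B43 = 3 ^ 14 := by
  have relators_eq : ({P 0, P 1, P 2, P 3} : Set B43) = Set.range P := by
    ext
    simp [Fin.exists_fin_succ, eq_comm]
  have card_B43 : Nat.card B43 = 3 ^ 14 := by
    simpa [Nat.choose] using FreeBurnsideThree.natCard (ι := Fin 4)
  have card_quotient : Nat.card BurnsideGammaHat = 3 ^ 10 := by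
    have lagrange := Subgroup.card_eq_card_quotient_mul_card_subgroup
      (Subgroup.normalClosure ({P 0, P 1, P 2, P 3} : Set B43))
    rw [card_B43, relators_eq, natCard_normalClosure_P, ← relators_eq] at lagrange
    exact Nat.eq_of_mul_eq_mul_right (m := 3 ^ 4) (by norm_num) lagrange.symm
  refine ⟨⟨fun e ↦ ?_⟩, card_quotient, card_B43⟩
  have card_eq := Nat.card_congr e.toEquiv
  rw [card_quotient, card_B43] at card_eq
  norm_num at card_eq
end
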